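/- Let Φ be a Young function such that Φ and its conjugate Φ̃ are of class Δ₂, let {T(x)}_{x∈ℝ^N} be an N-dimensional dynamical system on Ω, and let (ε_k) ⊆ (0,1] with ε_k → 0. Let (u_k) be measurable functions on Q×Ω with sup_k ‖u_k‖_{Φ,Q×Ω} < ∞ which weakly stochastically 2-scale converge to u₀. Assume each u_k admits a weak x-gradient Du_k : Q×Ω → ℝ^N with sup_k ‖|Du_k|‖_{Φ,Q×Ω} < ∞, in the sense that ∫_{Q×Ω} u_k(x,ω)(∂θ/∂x_i)(x,ω) dx dμ = −∫_{Q×Ω} (Du_k)_i(x,ω) θ(x,ω) dx dμ for 1 ≤ i ≤ N and every bounded measurable θ : Q×Ω → ℝ that is C¹ in x with bounded measurable x-gradient and vanishes for x outside some compact subset of Q. Then the 2-scale limit u₀ does not depend on the fast variable y: for every φ ∈ C_c^∞(Q), every bounded measurable ψ : Ω → ℝ admitting a bounded stochastic gradient, every ℤ^N-periodic g ∈ C^∞(ℝ^N), and every 1 ≤ i ≤ N, one has ∫_{Q×Ω×Y} u₀(x,ω,y) φ(x) ψ(ω) (∂g/∂y_i)(y) dx dμ(ω) dy = 0. -/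

import Mathlib

open MeasureTheory Filter Topology ENNReal

noncomputable section

/-- Euclidean norm on `Fin N → ℝ`. -/
def enorm2 {N : ℕ} (v : Fin N → ℝ) : ℝ := Real.sqrt (∑ i, v i ^ 2)

/-- `Φ : [0,∞) → [0,∞)` is a Young function: continuous, convex, positive on `(0,∞)`,
with `Φ(t)/t → 0` as `t → 0⁺` and `Φ(t)/t → ∞` as `t → ∞` (so `Φ(0) = 0`). -/
def IsYoung (Φ : ℝ → ℝ) : Prop :=
  ContinuousOn Φ (Set.Ici 0) ∧ ConvexOn ℝ (Set.Ici 0) Φ ∧ Φ 0 = 0 ∧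
    (∀ t : ℝ, 0 < t → 0 < Φ t) ∧ (∀ t : ℝ, 0 ≤ t → 0 ≤ Φ t) ∧
    Tendsto (fun t => Φ t / t) (nhdsWithin 0 (Set.Ioi 0)) (nhds 0) ∧
    Tendsto (fun t => Φ t / t) atTop atTop

/-- The `Δ₂`-condition (at infinity). -/
def Delta2 (Φ : ℝ → ℝ) : Prop :=
  ∃ α : ℝ, 0 < α ∧ ∃ t₀ : ℝ, 0 ≤ t₀ ∧ ∀ t : ℝ, t₀ ≤ t → Φ (2 * t) ≤ α * Φ t

/-- The `Δ'`-condition (at infinity). -/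
def DeltaPrime (Φ : ℝ → ℝ) : Prop :=
  ∃ k : ℝ, 0 < k ∧ ∃ t₀ s₀ : ℝ, 0 ≤ t₀ ∧ 0 ≤ s₀ ∧
    ∀ t s : ℝ, t₀ ≤ t → s₀ ≤ s → Φ (t * s) ≤ k * Φ t * Φ s

/-- The conjugate Young function `Φ̃(t) = sup_{s ≥ 0} (st − Φ(s))`. -/
def conjY (Φ : ℝ → ℝ) (t : ℝ) : ℝ := sSup ((fun s => s * t - Φ s) '' Set.Ici 0)

/-- The Luxemburg norm `‖u‖_{Φ,X} = inf {δ > 0 : ∫_X Φ(|u|/δ) dν ≤ 1}` (`+∞` if no such `δ`). -/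
def luxNorm {X : Type*} [MeasurableSpace X] (Φ : ℝ → ℝ) (ν : Measure X) (u : X → ℝ) : ℝ≥0∞ :=
  sInf {d : ℝ≥0∞ | ∃ δ : ℝ, 0 < δ ∧ d = ENNReal.ofReal δ ∧
    (∫⁻ x, ENNReal.ofReal (Φ (|u x| / δ)) ∂ν) ≤ 1}

/-- An `N`-dimensional dynamical system on `Ω` preserving `μ`. -/
def IsDynSys {N : ℕ} {Ω : Type*} [MeasurableSpace Ω] (μ : Measure Ω)
    (T : (Fin N → ℝ) → Ω → Ω) : Prop :=
  T 0 = id ∧ (∀ x y : Fin N → ℝ, T (x + y) = T x ∘ T y) ∧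
    (∀ x : Fin N → ℝ, MeasurePreserving (T x) μ μ) ∧
    Measurable fun p : (Fin N → ℝ) × Ω => T p.1 p.2

/-- `ℤ^N`-periodicity. -/
def ZPeriodic {N : ℕ} (g : (Fin N → ℝ) → ℝ) : Prop :=
  ∀ (y : Fin N → ℝ) (k : Fin N → ℤ), g (y + fun i => (k i : ℝ)) = g y

/-- The unit cube `Y = [0,1]^N`. -/
def Ycube (N : ℕ) : Set (Fin N → ℝ) := Set.Icc 0 1

/-- `ℳ` is countably generated modulo `μ`-null sets. -/
def CountGenModNull {Ω : Type*} [MeasurableSpace Ω] (μ : Measure Ω) : Prop :=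
  ∃ S : ℕ → Set Ω, (∀ n, MeasurableSet (S n)) ∧
    ∀ A : Set Ω, MeasurableSet A →
      ∃ B : Set Ω, MeasurableSet[MeasurableSpace.generateFrom (Set.range S)] B ∧
        μ (symmDiff A B) = 0

/-- Weak stochastic two-scale convergence of `(u k)` to `u₀` along the sequence `(ε k)`. -/
def WeakStoch2Scale {N : ℕ} {Ω : Type*} [MeasurableSpace Ω] (μ : Measure Ω)
    (T : (Fin N → ℝ) → Ω → Ω) (Q : Set (Fin N → ℝ)) (ε : ℕ → ℝ)
    (u : ℕ → (Fin N → ℝ) → Ω → ℝ) (u₀ : (Fin N → ℝ) → Ω → (Fin N → ℝ) → ℝ) : Prop :=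
  ∀ φ : (Fin N → ℝ) → ℝ, ContDiff ℝ (⊤ : ℕ∞) φ → HasCompactSupport φ → tsupport φ ⊆ Q →
    ∀ ψ : Ω → ℝ, Measurable ψ → (∃ C : ℝ, ∀ ω, |ψ ω| ≤ C) →
      ∀ g : (Fin N → ℝ) → ℝ, Continuous g → ZPeriodic g →
        Tendsto
          (fun k => ∫ x in Q, (∫ ω, u k x ω * φ x * ψ (T ((ε k)⁻¹ • x) ω) *
              g (((ε k) ^ 2)⁻¹ • x) ∂μ))
          atTop
          (nhds (∫ x in Q, (∫ ω, (∫ y in Ycube N, u₀ x ω y * φ x * ψ ω * g y) ∂μ)))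

/-- A bounded measurable `w : Ω → ℝ` admits the bounded stochastic gradient `G`. -/
def HasBddStochGrad {N : ℕ} {Ω : Type*} [MeasurableSpace Ω] (μ : Measure Ω)
    (T : (Fin N → ℝ) → Ω → Ω) (w : Ω → ℝ) (G : Ω → Fin N → ℝ) : Prop :=
  Measurable w ∧ (∃ C : ℝ, ∀ ω, |w ω| ≤ C) ∧ Measurable G ∧
    (∃ C : ℝ, ∀ ω, enorm2 (G ω) ≤ C) ∧
    ∀ᵐ ω ∂μ, ContDiff ℝ 1 (fun y => w (T y ω)) ∧
      ∀ (y : Fin N → ℝ) (i : Fin N),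
        fderiv ℝ (fun z => w (T z ω)) y (Pi.single i 1) = G (T y ω) i

/-!
Test the weak gradient of `u k` against `ε² φ(x) ψ(T(x/ε)ω) g(x/ε²)`, with `ε = ε k`. By the chain
rule, differentiating `g` costs a factor `ε⁻²`, differentiating `ψ` costs `ε⁻¹` and differentiating
`φ` costs nothing, so after multiplication by `ε²` only the term containing `∂ᵢg` survives as
`ε → 0`: all the others are `ε` or `ε²` times the integral of an `L¹`-bounded sequence against a
uniformly bounded one. That term converges to the two-scale integral, which is therefore zero.
-/

section L1Bounded

variable {X ι F : Type*} [MeasurableSpace X] [NormedAddCommGroup F] {ν : Measure X}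

/-- A family of integrable functions whose `L¹` norms are bounded uniformly in the index. -/
def L1Bounded (ν : Measure X) (v : ι → X → F) : Prop :=
  ∃ C : ℝ, ∀ k, Integrable (v k) ν ∧ ∫ x, ‖v k x‖ ∂ν ≤ C

namespace L1Bounded

variable {F' : Type*} [NormedAddCommGroup F']

theorem integrable {v : ι → X → F} (hv : L1Bounded ν v) (k : ι) : Integrable (v k) ν :=
  let ⟨_, hC⟩ := hv
  (hC k).1

theorem mono {v : ι → X → F} {w : ι → X → F'} (hv : L1Bounded ν v)
    (hw : ∀ k, AEStronglyMeasurable (w k) ν) (hwv : ∀ k x, ‖w k x‖ ≤ ‖v k x‖) :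
    L1Bounded ν w := by
  obtain ⟨C, hC⟩ := hv
  refine ⟨C, fun k => ?_⟩
  have hwk : Integrable (w k) ν := (hC k).1.mono (hw k) (ae_of_all _ (hwv k))
  exact ⟨hwk, (integral_mono hwk.norm (hC k).1.norm (hwv k)).trans (hC k).2⟩

theorem tendsto_mul_integral_zero {v : ι → X → ℝ} (hv : L1Bounded ν v) {w : ι → X → ℝ} {B : ℝ}
    (hw : ∀ k x, |w k x| ≤ B) {l : Filter ι} {a : ι → ℝ} (ha : Tendsto a l (𝓝 0)) :
    Tendsto (fun k => a k * ∫ x, v k x * w k x ∂ν) l (𝓝 0) := by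
  obtain ⟨C, hC⟩ := hv
  have norm_integral_le (k : ι) : ‖∫ x, v k x * w k x ∂ν‖ ≤ |B| * C :=
    calc ‖∫ x, v k x * w k x ∂ν‖ ≤ ∫ x, |B| * ‖v k x‖ ∂ν := by
          refine norm_integral_le_of_norm_le ((hC k).1.norm.const_mul _) (ae_of_all _ fun x => ?_)
          rw [norm_mul, mul_comm]
          gcongr
          exact (hw k x).trans (le_abs_self B)
      _ = |B| * ∫ x, ‖v k x‖ ∂ν := integral_const_mul _ _
      _ ≤ |B| * C := by gcongr; exact (hC k).2
  exact ha.zero_mul_isBoundedUnder_le (isBoundedUnder_of ⟨|B| * C, norm_integral_le⟩)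

end L1Bounded

end L1Bounded

section Luxemburg

variable {X : Type*} [MeasurableSpace X] {ν : Measure X} {Φ : ℝ → ℝ}

theorem exists_le_add_of_tendsto_div_atTop (hΦ : ∀ t, 0 ≤ t → 0 ≤ Φ t)
    (hΦ_top : Tendsto (fun t => Φ t / t) atTop atTop) :
    ∃ t₁, ∀ t, 0 ≤ t → t ≤ t₁ + Φ t := by
  obtain ⟨a, ha⟩ := eventually_atTop.1 (hΦ_top.eventually_ge_atTop 1)
  refine ⟨|a|, fun t ht => ?_⟩
  rcases le_or_gt t |a| with hta | hat
  · linarith [hΦ t ht]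
  · have h_one_le : 1 ≤ Φ t / t := ha t ((le_abs_self a).trans hat.le)
    rw [one_le_div ((abs_nonneg a).trans_lt hat)] at h_one_le
    linarith [abs_nonneg a]

theorem lintegral_enorm_le_of_luxNorm_lt {t₁ : ℝ} (hΦ : ∀ t, 0 ≤ t → t ≤ t₁ + Φ t)
    {v : X → ℝ} {M : ℝ≥0∞} (hv : luxNorm Φ ν v < M) :
    ∫⁻ x, ‖v x‖ₑ ∂ν ≤ M * (ENNReal.ofReal t₁ * ν Set.univ + 1) := by
  obtain ⟨_, ⟨δ, hδ, rfl, h_modular⟩, hδM⟩ := sInf_lt_iff.1 hv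
  have enorm_le (x : X) :
      ‖v x‖ₑ ≤ ENNReal.ofReal δ * (ENNReal.ofReal t₁ + ENNReal.ofReal (Φ (|v x| / δ))) :=
    calc ‖v x‖ₑ = ENNReal.ofReal (δ * (|v x| / δ)) := by
          rw [mul_div_cancel₀ _ hδ.ne', Real.enorm_eq_ofReal_abs]
      _ ≤ ENNReal.ofReal (δ * (t₁ + Φ (|v x| / δ))) := by
          gcongr
          exact hΦ _ (by positivity)
      _ ≤ _ := by
          rw [ENNReal.ofReal_mul hδ.le]
          gcongr
          exact ENNReal.ofReal_add_le
  calc ∫⁻ x, ‖v x‖ₑ ∂ν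
      ≤ ∫⁻ x, ENNReal.ofReal δ * (ENNReal.ofReal t₁ + ENNReal.ofReal (Φ (|v x| / δ))) ∂ν :=
        lintegral_mono enorm_le
    _ = ENNReal.ofReal δ *
          (ENNReal.ofReal t₁ * ν Set.univ + ∫⁻ x, ENNReal.ofReal (Φ (|v x| / δ)) ∂ν) := by
        rw [lintegral_const_mul' _ _ ENNReal.ofReal_ne_top, lintegral_add_left measurable_const,
          lintegral_const]
    _ ≤ M * (ENNReal.ofReal t₁ * ν Set.univ + 1) := by gcongr

theorem IsYoung.l1Bounded_of_iSup_luxNorm_lt_top [IsFiniteMeasure ν] (hΦ : IsYoung Φ) {ι : Type*}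
    {v : ι → X → ℝ} (hv : ∀ k, AEStronglyMeasurable (v k) ν)
    (hv_bdd : (⨆ k, luxNorm Φ ν (v k)) < ⊤) : L1Bounded ν v := by
  obtain ⟨-, -, -, -, hΦ_nonneg, -, hΦ_top⟩ := hΦ
  obtain ⟨t₁, ht₁⟩ := exists_le_add_of_tendsto_div_atTop hΦ_nonneg hΦ_top
  obtain ⟨M, hM, hM_top⟩ := exists_between hv_bdd
  set C := M * (ENNReal.ofReal t₁ * ν Set.univ + 1)
  have hC : C ≠ ⊤ := by finiteness
  have lintegral_le (k : ι) : ∫⁻ x, ‖v k x‖ₑ ∂ν ≤ C :=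
    lintegral_enorm_le_of_luxNorm_lt ht₁ ((le_iSup _ k).trans_lt hM)
  refine ⟨C.toReal, fun k => ⟨⟨hv k, (lintegral_le k).trans_lt hC.lt_top⟩, ?_⟩⟩
  rw [integral_norm_eq_lintegral_enorm (hv k)]
  exact ENNReal.toReal_mono hC (lintegral_le k)

end Luxemburg

section EuclideanNorm

variable {N : ℕ}

theorem abs_apply_le_enorm2 (v : Fin N → ℝ) (j : Fin N) : |v j| ≤ enorm2 v :=
  Real.abs_le_sqrt <|
    Finset.single_le_sum (f := fun i => v i ^ 2) (fun _ _ => sq_nonneg _) (Finset.mem_univ j)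

theorem norm_le_enorm2 (v : Fin N → ℝ) : ‖v‖ ≤ enorm2 v :=
  (pi_norm_le_iff_of_nonneg (Real.sqrt_nonneg _)).2 (abs_apply_le_enorm2 v)

theorem measurable_enorm2 : Measurable (enorm2 : (Fin N → ℝ) → ℝ) := by
  unfold enorm2
  fun_prop

end EuclideanNorm

section Periodic

variable {N : ℕ} {g : (Fin N → ℝ) → ℝ}

theorem ZPeriodic.exists_abs_le (hper : ZPeriodic g) (hg : Continuous g) :
    ∃ B, ∀ y, |g y| ≤ B := by
  obtain ⟨B, hB⟩ := (isCompact_Icc (a := (0 : Fin N → ℝ)) (b := 1)).exists_bound_of_continuousOn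
    hg.continuousOn
  refine ⟨B, fun y => ?_⟩
  have fract_mem : (y + fun i => ((-⌊y i⌋ : ℤ) : ℝ)) ∈ Set.Icc (0 : Fin N → ℝ) 1 := by
    constructor <;> intro i <;> simp only [Pi.add_apply, Pi.zero_apply, Pi.one_apply, Int.cast_neg]
    · linarith [Int.floor_le (y i)]
    · linarith [Int.lt_floor_add_one (y i)]
  rw [← hper y fun i => -⌊y i⌋]
  exact hB _ fract_mem

theorem ZPeriodic.fderiv_apply (hper : ZPeriodic g) (v : Fin N → ℝ) :
    ZPeriodic fun y => fderiv ℝ g y v := by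
  intro y k
  have g_shift : (fun z => g (z + fun i => (k i : ℝ))) = g := funext fun z => hper z k
  simp only [← fderiv_comp_add_right, g_shift]

end Periodic

section DirectionalDerivative

variable {E Ω : Type*} [NormedAddCommGroup E] [NormedSpace ℝ E]

/-- The derivative of a random field `θ(x, ω)` in the variable `x`, in the direction `v`. -/
def dirDeriv (v : E) (θ : E → Ω → ℝ) (x : E) (ω : Ω) : ℝ :=
  fderiv ℝ (fun z => θ z ω) x v

theorem dirDeriv_mul (v : E) {θ₁ θ₂ : E → Ω → ℝ} {ω : Ω} (h₁ : Differentiable ℝ fun x => θ₁ x ω)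
    (h₂ : Differentiable ℝ fun x => θ₂ x ω) (x : E) :
    dirDeriv v (fun x ω => θ₁ x ω * θ₂ x ω) x ω =
      θ₁ x ω * dirDeriv v θ₂ x ω + dirDeriv v θ₁ x ω * θ₂ x ω := by
  simp only [dirDeriv, fderiv_fun_mul (h₁ x) (h₂ x), add_apply,
    smul_apply, smul_eq_mul]
  ring

theorem dirDeriv_comp_smul (v : E) (θ : E → Ω → ℝ) (c : ℝ) (x : E) (ω : Ω) :
    dirDeriv v (fun x => θ (c • x)) x ω = c * dirDeriv v θ (c • x) ω := by
  simp only [dirDeriv, fderiv_comp_smul (f := fun z => θ z ω), smul_apply, smul_eq_mul]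

/-- The three-scale product `φ(x, ω) h(x/ε, ω) g(x/ε², ω)`, the general form of the oscillating
test functions of two-scale convergence. -/
def multiscale (φ h g : E → Ω → ℝ) (ε : ℝ) (x : E) (ω : Ω) : ℝ :=
  φ x ω * h (ε⁻¹ • x) ω * g ((ε ^ 2)⁻¹ • x) ω

theorem dirDeriv_multiscale (v : E) {φ h g : E → Ω → ℝ} {ω : Ω}
    (hφ : Differentiable ℝ fun x => φ x ω) (hh : Differentiable ℝ fun x => h x ω)
    (hg : Differentiable ℝ fun x => g x ω) (ε : ℝ) (x : E) :
    dirDeriv v (multiscale φ h g ε) x ω =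
      multiscale (dirDeriv v φ) h g ε x ω + ε⁻¹ * multiscale φ (dirDeriv v h) g ε x ω +
        (ε ^ 2)⁻¹ * multiscale φ h (dirDeriv v g) ε x ω := by
  have hh_scaled : Differentiable ℝ fun x => h (ε⁻¹ • x) ω :=
    hh.comp (differentiable_id.const_smul _)
  have hg_scaled : Differentiable ℝ fun x => g ((ε ^ 2)⁻¹ • x) ω :=
    hg.comp (differentiable_id.const_smul _)
  have hφh : Differentiable ℝ fun x => φ x ω * h (ε⁻¹ • x) ω := hφ.mul hh_scaled
  unfold multiscale
  rw [dirDeriv_mul v (θ₁ := fun x ω => φ x ω * h (ε⁻¹ • x) ω) hφh hg_scaled,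
    dirDeriv_mul v hφ hh_scaled, dirDeriv_comp_smul, dirDeriv_comp_smul]
  ring

end DirectionalDerivative

section RandomField

variable {E Ω : Type*} [MeasurableSpace E] [MeasurableSpace Ω]

/-- A bounded, jointly measurable random field `θ(x, ω)`. -/
structure IsBddField (θ : E → Ω → ℝ) : Prop where
  measurable : Measurable fun p : E × Ω => θ p.1 p.2
  exists_abs_le : ∃ C, ∀ x ω, |θ x ω| ≤ C

namespace IsBddField

variable {θ θ₁ θ₂ : E → Ω → ℝ}

theorem mul (h₁ : IsBddField θ₁) (h₂ : IsBddField θ₂) :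
    IsBddField fun x ω => θ₁ x ω * θ₂ x ω := by
  obtain ⟨C₁, hC₁⟩ := h₁.exists_abs_le
  obtain ⟨C₂, hC₂⟩ := h₂.exists_abs_le
  refine ⟨h₁.measurable.mul h₂.measurable, C₁ * C₂, fun x ω => ?_⟩
  rw [abs_mul]
  exact mul_le_mul (hC₁ x ω) (hC₂ x ω) (abs_nonneg _) ((abs_nonneg _).trans (hC₁ x ω))

theorem add (h₁ : IsBddField θ₁) (h₂ : IsBddField θ₂) :
    IsBddField fun x ω => θ₁ x ω + θ₂ x ω := by
  obtain ⟨C₁, hC₁⟩ := h₁.exists_abs_le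
  obtain ⟨C₂, hC₂⟩ := h₂.exists_abs_le
  exact ⟨h₁.measurable.add h₂.measurable, C₁ + C₂,
    fun x ω => (abs_add_le _ _).trans (add_le_add (hC₁ x ω) (hC₂ x ω))⟩

theorem const_mul (hθ : IsBddField θ) (c : ℝ) : IsBddField fun x ω => c * θ x ω := by
  obtain ⟨C, hC⟩ := hθ.exists_abs_le
  refine ⟨hθ.measurable.const_mul c, |c| * C, fun x ω => ?_⟩
  rw [abs_mul]
  gcongr
  exact hC x ω

theorem comp_fst (hθ : IsBddField θ) {f : E → E} (hf : Measurable f) :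
    IsBddField fun x => θ (f x) :=
  let ⟨C, hC⟩ := hθ.exists_abs_le
  ⟨hθ.measurable.comp ((hf.comp measurable_fst).prodMk measurable_snd), C, fun x => hC (f x)⟩

theorem indicator (hθ : IsBddField θ) {A : Set Ω} (hA : MeasurableSet A) :
    IsBddField fun x => A.indicator (θ x) := by
  obtain ⟨C, hC⟩ := hθ.exists_abs_le
  refine ⟨hθ.measurable.indicator (measurable_snd hA), C, fun x ω => ?_⟩
  exact (norm_indicator_le_norm_self (θ x) ω).trans (hC x ω)

theorem of_comp {T : E → Ω → Ω} (hT : Measurable fun p : E × Ω => T p.1 p.2) {w : Ω → ℝ}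
    (hw : Measurable w) (hw_bdd : ∃ C, ∀ ω, |w ω| ≤ C) : IsBddField fun x ω => w (T x ω) :=
  let ⟨C, hC⟩ := hw_bdd
  ⟨hw.comp hT, C, fun x ω => hC (T x ω)⟩

theorem integrable_mul {ν : Measure (E × Ω)} (hθ : IsBddField θ) {v : E × Ω → ℝ}
    (hv : Integrable v ν) : Integrable (fun p => v p * θ p.1 p.2) ν :=
  let ⟨_, hC⟩ := hθ.exists_abs_le
  hv.mul_bdd hθ.measurable.aestronglyMeasurable (ae_of_all _ fun p => hC p.1 p.2)

end IsBddField

variable [NormedAddCommGroup E] [NormedSpace ℝ E]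

/-- A bounded random field that is `C¹` in space, with bounded measurable spatial derivatives: the
regularity required of a test function for the weak gradient. -/
structure IsBddC1Field (θ : E → Ω → ℝ) : Prop extends IsBddField θ where
  contDiff : ∀ ω, ContDiff ℝ 1 fun x => θ x ω
  isBddField_dirDeriv : ∀ v, IsBddField (dirDeriv v θ)

namespace IsBddC1Field

variable {θ θ₁ θ₂ : E → Ω → ℝ}

theorem differentiable (hθ : IsBddC1Field θ) (ω : Ω) : Differentiable ℝ fun x => θ x ω :=
  (hθ.contDiff ω).differentiable one_ne_zero

theorem mul (h₁ : IsBddC1Field θ₁) (h₂ : IsBddC1Field θ₂) :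
    IsBddC1Field fun x ω => θ₁ x ω * θ₂ x ω where
  toIsBddField := h₁.toIsBddField.mul h₂.toIsBddField
  contDiff ω := (h₁.contDiff ω).mul (h₂.contDiff ω)
  isBddField_dirDeriv v := by
    have product_rule := funext₂ fun x ω =>
      dirDeriv_mul v (h₁.differentiable ω) (h₂.differentiable ω) x
    rw [product_rule]
    exact (h₁.toIsBddField.mul (h₂.isBddField_dirDeriv v)).add
      ((h₁.isBddField_dirDeriv v).mul h₂.toIsBddField)

theorem exists_abs_dirDeriv_le {ι : Type*} [Finite ι] (hθ : IsBddC1Field θ) (v : ι → E) :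
    ∃ C, ∀ x ω j, |dirDeriv (v j) θ x ω| ≤ C := by
  choose C hC using fun j => (hθ.isBddField_dirDeriv (v j)).exists_abs_le
  obtain ⟨M, hM⟩ := Finite.exists_le C
  exact ⟨M, fun x ω j => (hC j x ω).trans (hM j)⟩

variable [BorelSpace E]

theorem comp_smul (hθ : IsBddC1Field θ) (c : ℝ) : IsBddC1Field fun x => θ (c • x) where
  toIsBddField := hθ.comp_fst (measurable_const_smul c)
  contDiff ω := (hθ.contDiff ω).comp (contDiff_const_smul c)
  isBddField_dirDeriv v := by
    rw [funext₂ (dirDeriv_comp_smul v θ c)]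
    exact ((hθ.isBddField_dirDeriv v).comp_fst (measurable_const_smul c)).const_mul c

theorem of_contDiff {f : E → ℝ} (hf : ContDiff ℝ 1 f) (hf_bdd : ∃ C, ∀ x, |f x| ≤ C)
    (hf'_bdd : ∀ v, ∃ C, ∀ x, |fderiv ℝ f x v| ≤ C) : IsBddC1Field fun x (_ : Ω) => f x where
  measurable := hf.continuous.measurable.comp measurable_fst
  exists_abs_le := hf_bdd.imp fun _ hC x _ => hC x
  contDiff _ := hf
  isBddField_dirDeriv v :=
    ⟨((hf.continuous_fderiv one_ne_zero).clm_apply continuous_const).measurable.comp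
      measurable_fst, (hf'_bdd v).imp fun _ hC x _ => hC x⟩

theorem of_hasCompactSupport {f : E → ℝ} (hf : ContDiff ℝ 1 f) (hf_supp : HasCompactSupport f) :
    IsBddC1Field fun x (_ : Ω) => f x :=
  of_contDiff hf (hf_supp.exists_bound_of_continuous hf.continuous) fun v =>
    (hf_supp.fderiv_apply (𝕜 := ℝ) v).exists_bound_of_continuous
      ((hf.continuous_fderiv one_ne_zero).clm_apply continuous_const)

theorem of_zPeriodic {N : ℕ} {g : (Fin N → ℝ) → ℝ} (hg : ContDiff ℝ 1 g) (hper : ZPeriodic g) :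
    IsBddC1Field fun y (_ : Ω) => g y :=
  of_contDiff hg (hper.exists_abs_le hg.continuous) fun v =>
    (hper.fderiv_apply v).exists_abs_le
      ((hg.continuous_fderiv one_ne_zero).clm_apply continuous_const)

theorem multiscale {φ h g : E → Ω → ℝ} (hφ : IsBddC1Field φ) (hh : IsBddC1Field h)
    (hg : IsBddC1Field g) (ε : ℝ) : IsBddC1Field (multiscale φ h g ε) :=
  (hφ.mul (hh.comp_smul _)).mul (hg.comp_smul _)

end IsBddC1Field

namespace IsBddField

variable {φ h g : E → Ω → ℝ}

theorem exists_forall_abs_multiscale_le (hφ : IsBddField φ) (hh : IsBddField h)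
    (hg : IsBddField g) : ∃ B, ∀ ε x ω, |multiscale φ h g ε x ω| ≤ B := by
  obtain ⟨Cφ, hCφ⟩ := hφ.exists_abs_le
  obtain ⟨Ch, hCh⟩ := hh.exists_abs_le
  obtain ⟨Cg, hCg⟩ := hg.exists_abs_le
  refine ⟨Cφ * Ch * Cg, fun ε x ω => ?_⟩
  have hCφ_nonneg : 0 ≤ Cφ := (abs_nonneg _).trans (hCφ x ω)
  have hCh_nonneg : 0 ≤ Ch := (abs_nonneg _).trans (hCh x ω)
  rw [multiscale, abs_mul, abs_mul]
  exact mul_le_mul (mul_le_mul (hCφ _ _) (hCh _ _) (abs_nonneg _) hCφ_nonneg) (hCg _ _)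
    (abs_nonneg _) (mul_nonneg hCφ_nonneg hCh_nonneg)

theorem multiscale [BorelSpace E] (hφ : IsBddField φ) (hh : IsBddField h) (hg : IsBddField g)
    (ε : ℝ) : IsBddField (multiscale φ h g ε) :=
  (hφ.mul (hh.comp_fst (measurable_const_smul _))).mul (hg.comp_fst (measurable_const_smul _))

end IsBddField

theorem integral_mul_dirDeriv_multiscale [BorelSpace E] {ν : Measure (E × Ω)} {u : E → Ω → ℝ}
    (hu : Integrable (fun p : E × Ω => u p.1 p.2) ν) {φ h g : E → Ω → ℝ} (hφ : IsBddC1Field φ)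
    (hh : IsBddC1Field h) (hg : IsBddC1Field g) (v : E) (ε : ℝ) :
    ∫ p, u p.1 p.2 * dirDeriv v (multiscale φ h g ε) p.1 p.2 ∂ν =
      ∫ p, u p.1 p.2 * multiscale (dirDeriv v φ) h g ε p.1 p.2 ∂ν +
        ε⁻¹ * ∫ p, u p.1 p.2 * multiscale φ (dirDeriv v h) g ε p.1 p.2 ∂ν +
        (ε ^ 2)⁻¹ * ∫ p, u p.1 p.2 * multiscale φ h (dirDeriv v g) ε p.1 p.2 ∂ν := by
  have integrable_φ' := ((hφ.isBddField_dirDeriv v).multiscale hh.toIsBddField hg.toIsBddField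
    ε).integrable_mul hu
  have integrable_h' := (hφ.toIsBddField.multiscale (hh.isBddField_dirDeriv v) hg.toIsBddField
    ε).integrable_mul hu
  have integrable_g' := (hφ.toIsBddField.multiscale hh.toIsBddField (hg.isBddField_dirDeriv v)
    ε).integrable_mul hu
  rw [← integral_const_mul, ← integral_const_mul,
    ← integral_add' integrable_φ' (integrable_h'.const_mul _),
    ← integral_add (integrable_φ'.add (integrable_h'.const_mul _)) (integrable_g'.const_mul _)]
  refine integral_congr_ae (ae_of_all _ fun p => ?_)
  simp only [dirDeriv_multiscale v (hφ.differentiable p.2) (hh.differentiable p.2)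
    (hg.differentiable p.2), Pi.add_apply]
  ring

end RandomField

section StochasticGradient

theorem continuousLinearMap_apply_eq_sum_mul {ι : Type*} [Fintype ι] [DecidableEq ι]
    (L : (ι → ℝ) →L[ℝ] ℝ) (v : ι → ℝ) : L v = ∑ j, v j * L (Pi.single j 1) := by
  conv_lhs => rw [pi_eq_sum_univ' v]
  simp only [map_sum, map_smul, smul_eq_mul]

variable {N : ℕ} {Ω : Type*} [MeasurableSpace Ω] {μ : Measure Ω} {T : (Fin N → ℝ) → Ω → Ω}
  {ψ : Ω → ℝ} {G : Ω → Fin N → ℝ}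

theorem HasBddStochGrad.isBddField_sum_mul_grad
    (hT : Measurable fun p : (Fin N → ℝ) × Ω => T p.1 p.2) (hψ : HasBddStochGrad μ T ψ G)
    (v : Fin N → ℝ) : IsBddField fun y ω => ∑ j, v j * G (T y ω) j := by
  obtain ⟨-, -, hG, ⟨C, hC⟩, -⟩ := hψ
  refine IsBddField.of_comp (w := fun ω => ∑ j, v j * G ω j) hT (by fun_prop)
    ⟨∑ j, |v j| * C, fun ω => ?_⟩
  refine (Finset.abs_sum_le_sum_abs _ _).trans (Finset.sum_le_sum fun j _ => ?_)
  rw [abs_mul]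
  gcongr
  exact (abs_apply_le_enorm2 _ j).trans (hC ω)

/-- Test functions must be `C¹` for every `ω`, whereas `ψ ∘ T` is so only almost surely: replace it
by zero on a measurable null set of bad `ω`. -/
theorem HasBddStochGrad.exists_isBddC1Field_ae_eq
    (hT : Measurable fun p : (Fin N → ℝ) × Ω => T p.1 p.2) (hψ : HasBddStochGrad μ T ψ G) :
    ∃ h : (Fin N → ℝ) → Ω → ℝ, IsBddC1Field h ∧ ∀ᵐ ω ∂μ, ∀ y, h y ω = ψ (T y ω) := by
  have isBddField_dir := hψ.isBddField_sum_mul_grad hT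
  obtain ⟨hψ_meas, hψ_bdd, -, -, hψ_ae⟩ := hψ
  obtain ⟨A, hA_ae, hA_meas, hA⟩ := hψ_ae.exists_measurable_mem
  have dirDeriv_indicator (v : Fin N → ℝ) :
      dirDeriv v (fun y => A.indicator fun ω => ψ (T y ω)) =
        fun y => A.indicator fun ω => ∑ j, v j * G (T y ω) j := by
    funext y ω
    by_cases hω : ω ∈ A
    · simp only [dirDeriv, Set.indicator_of_mem hω, continuousLinearMap_apply_eq_sum_mul _ v,
        (hA ω hω).2]
    · simp [dirDeriv, Set.indicator_of_notMem hω]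
  refine ⟨fun y => A.indicator fun ω => ψ (T y ω), ?_, ?_⟩
  · refine ⟨(IsBddField.of_comp hT hψ_meas hψ_bdd).indicator hA_meas, fun ω => ?_,
      fun v => dirDeriv_indicator v ▸ (isBddField_dir v).indicator hA_meas⟩
    by_cases hω : ω ∈ A
    · simpa only [Set.indicator_of_mem hω] using (hA ω hω).1
    · simpa only [Set.indicator_of_notMem hω] using contDiff_const
  · filter_upwards [hA_ae] with ω hω y using Set.indicator_of_mem hω _

end StochasticGradient

section WeakGradient

variable {N : ℕ} {Ω : Type*} [MeasurableSpace Ω] {μ : Measure Ω} {Q : Set (Fin N → ℝ)}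

/-- `Du` is a weak gradient of `u` in the spatial variable on `Q × Ω`: integration by parts holds
against every bounded `C¹` random field vanishing outside a compact subset of `Q`. -/
def HasWeakGrad (μ : Measure Ω) (Q : Set (Fin N → ℝ)) (u : (Fin N → ℝ) → Ω → ℝ)
    (Du : (Fin N → ℝ) → Ω → Fin N → ℝ) : Prop :=
  ∀ (i : Fin N) (θ : (Fin N → ℝ) → Ω → ℝ), IsBddC1Field θ →
    (∃ K : Set (Fin N → ℝ), IsCompact K ∧ K ⊆ Q ∧ ∀ x ∉ K, ∀ ω, θ x ω = 0) →
      ∫ p, u p.1 p.2 * dirDeriv (Pi.single i 1) θ p.1 p.2 ∂((volume.restrict Q).prod μ) =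
        -∫ p, Du p.1 p.2 i * θ p.1 p.2 ∂((volume.restrict Q).prod μ)

variable {φ h g : (Fin N → ℝ) → Ω → ℝ}

theorem HasWeakGrad.integral_mul_multiscale_dirDeriv {u : (Fin N → ℝ) → Ω → ℝ}
    {Du : (Fin N → ℝ) → Ω → Fin N → ℝ} (hDu : HasWeakGrad μ Q u Du)
    (hu : Integrable (fun p : (Fin N → ℝ) × Ω => u p.1 p.2) ((volume.restrict Q).prod μ))
    (hφ : IsBddC1Field φ) (hh : IsBddC1Field h) (hg : IsBddC1Field g)
    (hφ_supp : ∃ K : Set (Fin N → ℝ), IsCompact K ∧ K ⊆ Q ∧ ∀ x ∉ K, ∀ ω, φ x ω = 0)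
    {ε : ℝ} (hε : ε ≠ 0) (i : Fin N) :
    ∫ p, u p.1 p.2 * multiscale φ h (dirDeriv (Pi.single i 1) g) ε p.1 p.2
        ∂((volume.restrict Q).prod μ) =
      -(ε ^ 2 * ∫ p, Du p.1 p.2 i * multiscale φ h g ε p.1 p.2 ∂((volume.restrict Q).prod μ) +
        ε ^ 2 * ∫ p, u p.1 p.2 * multiscale (dirDeriv (Pi.single i 1) φ) h g ε p.1 p.2
          ∂((volume.restrict Q).prod μ) +
        ε * ∫ p, u p.1 p.2 * multiscale φ (dirDeriv (Pi.single i 1) h) g ε p.1 p.2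
          ∂((volume.restrict Q).prod μ)) := by
  have by_parts := hDu i (multiscale φ h g ε) (hφ.multiscale hh hg ε) <| by
    obtain ⟨K, hK, hKQ, hφK⟩ := hφ_supp
    exact ⟨K, hK, hKQ, fun x hx ω => by simp only [multiscale, hφK x hx, zero_mul]⟩
  rw [integral_mul_dirDeriv_multiscale hu hφ hh hg] at by_parts
  rw [← neg_eq_iff_eq_neg.2 by_parts]
  field_simp
  ring

theorem tendsto_integral_mul_multiscale_dirDeriv_zero {ι : Type*} {l : Filter ι} {ε : ι → ℝ}
    (hε : ∀ k, ε k ≠ 0) (hε0 : Tendsto ε l (𝓝 0))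
    {u : ι → (Fin N → ℝ) → Ω → ℝ} {Du : ι → (Fin N → ℝ) → Ω → Fin N → ℝ}
    (hu : L1Bounded ((volume.restrict Q).prod μ) fun k p => u k p.1 p.2)
    (hDu : L1Bounded ((volume.restrict Q).prod μ) fun k p => Du k p.1 p.2)
    (hgrad : ∀ k, HasWeakGrad μ Q (u k) (Du k))
    (hφ : IsBddC1Field φ) (hh : IsBddC1Field h) (hg : IsBddC1Field g)
    (hφ_supp : ∃ K : Set (Fin N → ℝ), IsCompact K ∧ K ⊆ Q ∧ ∀ x ∉ K, ∀ ω, φ x ω = 0)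
    (i : Fin N) :
    Tendsto (fun k => ∫ p, u k p.1 p.2 * multiscale φ h (dirDeriv (Pi.single i 1) g) (ε k) p.1 p.2
      ∂((volume.restrict Q).prod μ)) l (𝓝 0) := by
  have hDu_i : L1Bounded ((volume.restrict Q).prod μ) fun k p => Du k p.1 p.2 i :=
    hDu.mono (fun k => ((hDu.integrable k).eval i).aestronglyMeasurable)
      fun k p => norm_le_pi_norm (Du k p.1 p.2) i
  have hε2 : Tendsto (fun k => ε k ^ 2) l (𝓝 0) := by simpa using hε0.pow 2
  obtain ⟨B, hB⟩ := hφ.toIsBddField.exists_forall_abs_multiscale_le hh.toIsBddField hg.toIsBddField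
  obtain ⟨Bφ, hBφ⟩ := (hφ.isBddField_dirDeriv (Pi.single i 1)).exists_forall_abs_multiscale_le
    hh.toIsBddField hg.toIsBddField
  obtain ⟨Bh, hBh⟩ := hφ.toIsBddField.exists_forall_abs_multiscale_le
    (hh.isBddField_dirDeriv (Pi.single i 1)) hg.toIsBddField
  simp only [fun k => (hgrad k).integral_mul_multiscale_dirDeriv (hu.integrable k) hφ hh hg hφ_supp
    (hε k) i]
  simpa using (((hDu_i.tendsto_mul_integral_zero (fun k p => hB (ε k) p.1 p.2) hε2).add
    (hu.tendsto_mul_integral_zero (fun k p => hBφ (ε k) p.1 p.2) hε2)).add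
    (hu.tendsto_mul_integral_zero (fun k p => hBh (ε k) p.1 p.2) hε0)).neg

end WeakGradient

theorem stmt12_general {N : ℕ} {Ω : Type*} [MeasurableSpace Ω] (μ : Measure Ω) [SFinite μ]
    (T : (Fin N → ℝ) → Ω → Ω) (hT : Measurable fun p : (Fin N → ℝ) × Ω => T p.1 p.2)
    (Q : Set (Fin N → ℝ)) (ε : ℕ → ℝ) (hε : ∀ k, ε k ≠ 0) (hε0 : Tendsto ε atTop (𝓝 0))
    (u : ℕ → (Fin N → ℝ) → Ω → ℝ) (Du : ℕ → (Fin N → ℝ) → Ω → Fin N → ℝ)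
    (hu : L1Bounded ((volume.restrict Q).prod μ) fun k p => u k p.1 p.2)
    (hDu : L1Bounded ((volume.restrict Q).prod μ) fun k p => Du k p.1 p.2)
    (hgrad : ∀ k, HasWeakGrad μ Q (u k) (Du k))
    (u₀ : (Fin N → ℝ) → Ω → (Fin N → ℝ) → ℝ) (hconv : WeakStoch2Scale μ T Q ε u u₀)
    {φ : (Fin N → ℝ) → ℝ} (hφ : ContDiff ℝ (⊤ : ℕ∞) φ) (hφ_supp : HasCompactSupport φ)
    (hφQ : tsupport φ ⊆ Q) {ψ : Ω → ℝ} {G : Ω → Fin N → ℝ} (hψ : HasBddStochGrad μ T ψ G)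
    {g : (Fin N → ℝ) → ℝ} (hg : ContDiff ℝ 1 g) (hg_per : ZPeriodic g) (i : Fin N) :
    ∫ x in Q, ∫ ω, (∫ y in Ycube N,
      u₀ x ω y * φ x * ψ ω * fderiv ℝ g y (Pi.single i 1)) ∂μ = 0 := by
  obtain ⟨h, hh, hhψ⟩ := hψ.exists_isBddC1Field_ae_eq hT
  obtain ⟨hψ_meas, hψ_bdd, -⟩ := hψ
  have hφ_field : IsBddC1Field fun x (_ : Ω) => φ x :=
    .of_hasCompactSupport (hφ.of_le (by exact_mod_cast le_top)) hφ_supp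
  have hg_field : IsBddC1Field fun y (_ : Ω) => g y := .of_zPeriodic hg hg_per
  have tendsto_limit := hconv φ hφ hφ_supp hφQ ψ hψ_meas hψ_bdd _
    ((hg.continuous_fderiv one_ne_zero).clm_apply continuous_const)
    (hg_per.fderiv_apply (Pi.single i 1))
  have tendsto_zero := tendsto_integral_mul_multiscale_dirDeriv_zero hε hε0 hu hDu hgrad hφ_field
    hh hg_field ⟨tsupport φ, hφ_supp, hφQ, fun x hx _ => image_eq_zero_of_notMem_tsupport hx⟩ i
  refine tendsto_nhds_unique tendsto_limit (tendsto_zero.congr fun k => ?_)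
  rw [integral_prod _ ((hφ_field.toIsBddField.multiscale hh.toIsBddField
    (hg_field.isBddField_dirDeriv _) (ε k)).integrable_mul (hu.integrable k))]
  refine integral_congr_ae (ae_of_all _ fun x => integral_congr_ae ?_)
  filter_upwards [hhψ] with ω hω
  simp only [multiscale, dirDeriv, hω]
  ring

/-- the stochastic two-scale limit of a bounded sequence with bounded
gradients does not depend on the fast periodic variable. -/
theorem stmt12 {N : ℕ} (hN : 1 ≤ N) {Ω : Type*} [MeasurableSpace Ω] (μ : Measure Ω)
    [IsProbabilityMeasure μ]
    (Φ : ℝ → ℝ) (hΦ : IsYoung Φ) (hΦ2 : Delta2 Φ) (hΦc2 : Delta2 (conjY Φ))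
    (T : (Fin N → ℝ) → Ω → Ω) (hT : IsDynSys μ T)
    (Q : Set (Fin N → ℝ)) (hQo : IsOpen Q) (hQb : Bornology.IsBounded Q)
    (ε : ℕ → ℝ) (hε : ∀ k, ε k ∈ Set.Ioc (0 : ℝ) 1) (hε0 : Tendsto ε atTop (nhds 0))
    (u : ℕ → (Fin N → ℝ) → Ω → ℝ) (Du : ℕ → (Fin N → ℝ) → Ω → Fin N → ℝ)
    (humeas : ∀ k, Measurable fun p : (Fin N → ℝ) × Ω => u k p.1 p.2)
    (hubd : (⨆ k, luxNorm Φ ((volume.restrict Q).prod μ) fun p => u k p.1 p.2) < ⊤)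
    (u₀ : (Fin N → ℝ) → Ω → (Fin N → ℝ) → ℝ)
    (hu₀meas : Measurable fun p : ((Fin N → ℝ) × Ω) × (Fin N → ℝ) => u₀ p.1.1 p.1.2 p.2)
    (hu₀per : ∀ x ω, ZPeriodic (u₀ x ω))
    (hu₀bd : luxNorm Φ (((volume.restrict Q).prod μ).prod (volume.restrict (Ycube N)))
      (fun p => u₀ p.1.1 p.1.2 p.2) < ⊤)
    (hconv : WeakStoch2Scale μ T Q ε u u₀)
    (hDumeas : ∀ k, Measurable fun p : (Fin N → ℝ) × Ω => Du k p.1 p.2)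
    (hDubd : (⨆ k, luxNorm Φ ((volume.restrict Q).prod μ)
      fun p => enorm2 (Du k p.1 p.2)) < ⊤)
    (hgrad : ∀ (k : ℕ) (i : Fin N) (θ : (Fin N → ℝ) → Ω → ℝ),
      (Measurable fun p : (Fin N → ℝ) × Ω => θ p.1 p.2) →
      (∃ C : ℝ, ∀ x ω, |θ x ω| ≤ C) →
      (∀ ω, ContDiff ℝ 1 (fun x => θ x ω)) →
      (∀ j : Fin N, Measurable fun p : (Fin N → ℝ) × Ω =>
        fderiv ℝ (fun z => θ z p.2) p.1 (Pi.single j 1)) →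
      (∃ C : ℝ, ∀ x ω (j : Fin N), |fderiv ℝ (fun z => θ z ω) x (Pi.single j 1)| ≤ C) →
      (∃ K : Set (Fin N → ℝ), IsCompact K ∧ K ⊆ Q ∧ ∀ x ∉ K, ∀ ω, θ x ω = 0) →
      (∫ p, u k p.1 p.2 * fderiv ℝ (fun z => θ z p.2) p.1 (Pi.single i 1)
          ∂((volume.restrict Q).prod μ)) =
        -(∫ p, Du k p.1 p.2 i * θ p.1 p.2 ∂((volume.restrict Q).prod μ))) :
    ∀ φ : (Fin N → ℝ) → ℝ, ContDiff ℝ (⊤ : ℕ∞) φ → HasCompactSupport φ → tsupport φ ⊆ Q →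
      ∀ ψ : Ω → ℝ, (∃ G : Ω → Fin N → ℝ, HasBddStochGrad μ T ψ G) →
        ∀ g : (Fin N → ℝ) → ℝ, ContDiff ℝ (⊤ : ℕ∞) g → ZPeriodic g →
          ∀ i : Fin N,
            (∫ x in Q, (∫ ω, (∫ y in Ycube N,
              u₀ x ω y * φ x * ψ ω * fderiv ℝ g y (Pi.single i 1)) ∂μ)) = 0 := by
  have : IsFiniteMeasure (volume.restrict Q) :=
    isFiniteMeasure_restrict.2 hQb.measure_lt_top.ne
  have hDu_norm := hΦ.l1Bounded_of_iSup_luxNorm_lt_top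
    (fun k => (measurable_enorm2.comp (hDumeas k)).aestronglyMeasurable) hDubd
  have hDu := hDu_norm.mono (fun k => (hDumeas k).aestronglyMeasurable)
    fun k p => (norm_le_enorm2 _).trans (le_abs_self _)
  have hu := hΦ.l1Bounded_of_iSup_luxNorm_lt_top (fun k => (humeas k).aestronglyMeasurable) hubd
  rintro φ hφ hφ_supp hφQ ψ ⟨G, hψ⟩ g hg hg_per i
  exact stmt12_general μ T hT.2.2.2 Q ε (fun k => (hε k).1.ne') hε0 u Du hu hDu
    (fun k i θ hθ hθ_supp => hgrad k i θ hθ.measurable hθ.exists_abs_le hθ.contDiff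
      (fun j => (hθ.isBddField_dirDeriv _).measurable) (hθ.exists_abs_dirDeriv_le _) hθ_supp)
    u₀ hconv hφ hφ_supp hφQ hψ (hg.of_le (by exact_mod_cast le_top)) hg_per i
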